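/- arXiv:2509.07371 — 7 statements merged into one kernel-verified Lean document; each statement's English description precedes it below -/
import Mathlib

section
/- For the dispersion relation ω(k) = k·√((2+k²)/(1+k²)) one has deriv ω 0 = √2, and for every k ≠ 0 the derivative satisfies 0 < deriv ω k < √2. Consequently, for every k₀ > 0 the group velocity c_g = deriv ω k₀ satisfies c_g − j·(deriv ω 0) ≠ 0 for both j = 1 and j = −1. -/
noncomputable def qhat (k : ℝ) : ℝ := Real.sqrt ((2 + k ^ 2) / (1 + k ^ 2))

noncomputable def ω (k : ℝ) : ℝ := k * qhat k

/-!
Put `u = 1 / (1 + k²) ∈ (0, 1]`. Then `qhat² = 1 + u`, and since `k² u = 1 - u` the group velocity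
is `ω' = (1 + u²) / √(1 + u)`, which is visibly positive. For `k ≠ 0` we have `u < 1`, so `u² < u`
gives `ω' < √(1 + u) = qhat < √2`.
-/

theorem qhat_eq_sqrt_one_add_inv (k : ℝ) : qhat k = √(1 + (1 + k ^ 2)⁻¹) := by
  rw [qhat]
  congr 1
  field_simp
  ring

theorem qhat_zero : qhat 0 = √2 := by
  simp [qhat]

theorem qhat_pos (k : ℝ) : 0 < qhat k :=
  Real.sqrt_pos.2 (by positivity)

theorem sq_qhat (k : ℝ) : qhat k ^ 2 = 1 + (1 + k ^ 2)⁻¹ := by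
  rw [qhat_eq_sqrt_one_add_inv, Real.sq_sqrt (by positivity)]

theorem inv_one_add_sq_lt_one {k : ℝ} (hk : k ≠ 0) : (1 + k ^ 2)⁻¹ < 1 :=
  inv_lt_one_of_one_lt₀ (lt_add_of_pos_right 1 (by positivity))

theorem qhat_lt_sqrt_two {k : ℝ} (hk : k ≠ 0) : qhat k < √2 := by
  rw [qhat_eq_sqrt_one_add_inv]
  exact Real.sqrt_lt_sqrt (by positivity) (by linarith [inv_one_add_sq_lt_one hk])

theorem hasDerivAt_qhat (k : ℝ) : HasDerivAt qhat (-(k * (1 + k ^ 2)⁻¹ ^ 2) / qhat k) k := by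
  have h_inv : HasDerivAt (fun x : ℝ ↦ 1 + (1 + x ^ 2)⁻¹) (-(2 * k) / (1 + k ^ 2) ^ 2) k := by
    simpa using (((hasDerivAt_pow 2 k).const_add 1).fun_inv (by positivity)).const_add 1
  have h_sqrt := h_inv.sqrt (by positivity)
  simp only [← qhat_eq_sqrt_one_add_inv] at h_sqrt
  exact h_sqrt.congr_deriv (by field_simp)

theorem hasDerivAt_ω (k : ℝ) : HasDerivAt ω ((1 + (1 + k ^ 2)⁻¹ ^ 2) / qhat k) k := by
  have hq : qhat k ≠ 0 := (qhat_pos k).ne'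
  refine ((hasDerivAt_id' k).fun_mul (hasDerivAt_qhat k)).congr_deriv ?_
  calc 1 * qhat k + k * (-(k * (1 + k ^ 2)⁻¹ ^ 2) / qhat k)
      = (qhat k ^ 2 - k ^ 2 * (1 + k ^ 2)⁻¹ ^ 2) / qhat k := by
        field_simp
        ring
    _ = (1 + (1 + k ^ 2)⁻¹ ^ 2) / qhat k := by
        rw [sq_qhat]
        field_simp
        ring

theorem deriv_ω (k : ℝ) : deriv ω k = (1 + (1 + k ^ 2)⁻¹ ^ 2) / qhat k :=
  (hasDerivAt_ω k).deriv

theorem deriv_ω_zero : deriv ω 0 = √2 := by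
  norm_num [deriv_ω, qhat_zero]

theorem deriv_ω_pos (k : ℝ) : 0 < deriv ω k := by
  rw [deriv_ω]
  exact div_pos (by positivity) (qhat_pos k)

theorem deriv_ω_lt_qhat {k : ℝ} (hk : k ≠ 0) : deriv ω k < qhat k := by
  have h_sq_lt : (1 + k ^ 2)⁻¹ ^ 2 < (1 + k ^ 2)⁻¹ :=
    pow_lt_self_of_lt_one₀ (by positivity) (inv_one_add_sq_lt_one hk) one_lt_two
  rw [deriv_ω, div_lt_iff₀ (qhat_pos k), ← sq, sq_qhat]
  gcongr

theorem deriv_ω_lt_sqrt_two {k : ℝ} (hk : k ≠ 0) : deriv ω k < √2 :=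
  (deriv_ω_lt_qhat hk).trans (qhat_lt_sqrt_two hk)

theorem stmt1 :
    deriv ω 0 = Real.sqrt 2 ∧
    (∀ k : ℝ, k ≠ 0 → 0 < deriv ω k ∧ deriv ω k < Real.sqrt 2) ∧
    (∀ k₀ : ℝ, 0 < k₀ → ∀ j : ℝ, (j = 1 ∨ j = -1) →
      deriv ω k₀ - j * deriv ω 0 ≠ 0) := by
  refine ⟨deriv_ω_zero, fun k hk ↦ ⟨deriv_ω_pos k, deriv_ω_lt_sqrt_two hk⟩, ?_⟩
  rintro k₀ hk₀ j (rfl | rfl)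
  · rw [one_mul, deriv_ω_zero]
    exact (sub_neg.2 (deriv_ω_lt_sqrt_two hk₀.ne')).ne
  · rw [neg_one_mul, sub_neg_eq_add]
    exact (add_pos (deriv_ω_pos k₀) (deriv_ω_pos 0)).ne'
end

section
/- (Harmonic non-resonance condition) For every k₀ > 0, every integer ℓ with 2 ≤ ℓ ≤ 5, and every j ∈ {1, −1}, one has ℓ·ω(k₀) − j·ω(ℓ·k₀) ≠ 0. -/
/-!
The phase velocity `ω k / k = qhat k` is strictly decreasing in `|k|`. The harmonic `c * k` with
`1 < |c|` therefore travels strictly slower than `k`, and multiplying by the wave number gives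
`|ω (c * k)| < |c * ω k|`, which rules out `c * ω k = j * ω (c * k)` as soon as `|j| ≤ 1`.
-/

theorem qhat_nonneg (k : ℝ) : 0 ≤ qhat k :=
  Real.sqrt_nonneg _

theorem qhat_lt_qhat_iff {a b : ℝ} : qhat a < qhat b ↔ |b| < |a| := by
  have cross_mul : (2 + a ^ 2) * (1 + b ^ 2) < (2 + b ^ 2) * (1 + a ^ 2) ↔ b ^ 2 < a ^ 2 := by
    constructor <;> intro h <;> linarith
  rw [qhat, qhat, Real.sqrt_lt_sqrt_iff (by positivity),
    div_lt_div_iff₀ (by positivity) (by positivity), cross_mul, sq_lt_sq]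

theorem abs_ω (k : ℝ) : |ω k| = |k| * qhat k := by
  rw [ω, abs_mul, abs_of_nonneg (qhat_nonneg k)]

theorem abs_ω_mul_lt {c k : ℝ} (hc : 1 < |c|) (hk : k ≠ 0) : |ω (c * k)| < |c * ω k| := by
  have abs_lt_abs_mul : |k| < |c * k| := by
    rw [abs_mul]
    exact lt_mul_of_one_lt_left (abs_pos.2 hk) hc
  calc
    |ω (c * k)| = |c * k| * qhat (c * k) := abs_ω _
    _ < |c * k| * qhat k :=
      mul_lt_mul_of_pos_left (qhat_lt_qhat_iff.2 abs_lt_abs_mul)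
        ((abs_nonneg k).trans_lt abs_lt_abs_mul)
    _ = |c * ω k| := by rw [abs_mul, abs_mul, abs_ω, mul_assoc]

theorem stmt2_general {k c j : ℝ} (hk : k ≠ 0) (hc : 1 < |c|) (hj : |j| ≤ 1) :
    c * ω k - j * ω (c * k) ≠ 0 := by
  intro resonance
  refine (abs_ω_mul_lt hc hk).not_ge ?_
  calc
    |c * ω k| = |j| * |ω (c * k)| := by rw [sub_eq_zero.1 resonance, abs_mul]
    _ ≤ |ω (c * k)| := mul_le_of_le_one_left (abs_nonneg _) hj

theorem stmt2 (k₀ : ℝ) (hk₀ : 0 < k₀) (ℓ : ℤ) (h2 : 2 ≤ ℓ) (h5 : ℓ ≤ 5)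
    (j : ℝ) (hj : j = 1 ∨ j = -1) :
    (ℓ : ℝ) * ω k₀ - j * ω ((ℓ : ℝ) * k₀) ≠ 0 := by
  have one_lt : (1 : ℝ) < ℓ := by exact_mod_cast h2
  exact stmt2_general hk₀.ne' (one_lt.trans_le (le_abs_self _)) ((abs_eq zero_le_one).2 hj).le
end

section
/- (Asymptotics of the opposite-mode quadratic kernel) For every κ ∈ ℝ and all j, σ ∈ {1, −1} there exists C > 0 such that for every k ∈ ℝ one has |ζ^σ_{j,−j}(k, κ, k−κ) + 2j| ≤ C/(1+k²). In particular ζ^σ_{j,−j}(k, κ, k−κ) → −2j as |k| → ∞, with error of order O(|k|⁻²). -/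
/-- The quadratic interaction kernel ζ^σ_{j,p}(k, κ, m) of the diagonalized
ion Euler–Poisson system. -/
noncomputable def ζ (σ j p : ℝ) (k κ m : ℝ) : ℝ :=
  p * qhat m + σ * qhat κ + σ * (j * p / qhat k) * qhat κ * qhat m
    - j / qhat k - j / (qhat k * (1 + k ^ 2) * (1 + κ ^ 2) * (1 + m ^ 2))

/-!
Since `1 ≤ √(1 + u) ≤ 1 + u`, the symbol `qhat k` equals `1` up to an error `1 / (1 + k ^ 2)`.
Hence `ζ σ j p k κ m` differs from `p - j + σ * (1 + j * p) * qhat κ` by terms that decay in `k` or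
in `m`, and for `m = k - κ` Peetre's inequality turns decay in `m` into decay in `k`. For opposite
modes `j * p = -1`, so the `σ`-terms cancel and `-2 * j` remains.
-/

theorem abs_div_sub_one_le {K : Type*} [Field K] [LinearOrder K] [IsStrictOrderedRing K]
    (a : K) {b : K} (hb : 1 ≤ b) : |a / b - 1| ≤ |a - b| := by
  have hb₀ : 0 < b := one_pos.trans_le hb
  rw [div_sub_one hb₀.ne', abs_div, abs_of_pos hb₀]
  exact div_le_self (abs_nonneg _) hb

/-- Peetre's inequality. -/
theorem one_add_norm_sq_le {E : Type*} [SeminormedAddCommGroup E] (x y : E) :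
    1 + ‖x‖ ^ 2 ≤ 2 * (1 + ‖y‖ ^ 2) * (1 + ‖x - y‖ ^ 2) := by
  have hx : ‖x‖ ^ 2 ≤ 2 * (‖y‖ ^ 2 + ‖x - y‖ ^ 2) :=
    (pow_le_pow_left₀ (norm_nonneg x) (norm_le_norm_add_norm_sub' x y) 2).trans add_sq_le
  nlinarith [mul_nonneg (sq_nonneg ‖y‖) (sq_nonneg ‖x - y‖)]

theorem one_div_one_add_sub_sq_le (k κ : ℝ) :
    1 / (1 + (k - κ) ^ 2) ≤ 2 * (1 + κ ^ 2) / (1 + k ^ 2) := by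
  rw [div_le_div_iff₀ (by positivity) (by positivity), one_mul]
  simpa using one_add_norm_sq_le k κ

theorem qhat_eq_sqrt_one_add (k : ℝ) : qhat k = √(1 + 1 / (1 + k ^ 2)) := by
  have h : (2 + k ^ 2) / (1 + k ^ 2) = 1 + 1 / (1 + k ^ 2) := by
    field_simp
    ring
  rw [qhat, h]

theorem one_le_qhat (k : ℝ) : 1 ≤ qhat k := by
  rw [qhat_eq_sqrt_one_add, Real.one_le_sqrt, le_add_iff_nonneg_right]
  positivity

theorem abs_qhat_sub_one_le (k : ℝ) : |qhat k - 1| ≤ 1 / (1 + k ^ 2) := by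
  rw [abs_of_nonneg (sub_nonneg.2 (one_le_qhat k)), sub_le_iff_le_add', qhat_eq_sqrt_one_add]
  have h : 0 ≤ 1 / (1 + k ^ 2) := by positivity
  exact Real.sqrt_le_self_iff.2 (.inr (le_add_of_nonneg_right h))

theorem abs_one_div_qhat_sub_one_le (k : ℝ) : |1 / qhat k - 1| ≤ 1 / (1 + k ^ 2) :=
  (abs_div_sub_one_le 1 (one_le_qhat k)).trans <| by
    rw [abs_sub_comm]
    exact abs_qhat_sub_one_le k

theorem abs_qhat_div_qhat_sub_one_le (m k : ℝ) :
    |qhat m / qhat k - 1| ≤ 1 / (1 + m ^ 2) + 1 / (1 + k ^ 2) :=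
  calc |qhat m / qhat k - 1|
      ≤ |qhat m - qhat k| := abs_div_sub_one_le _ (one_le_qhat k)
    _ ≤ |qhat m - 1| + |1 - qhat k| := abs_sub_le _ _ _
    _ ≤ 1 / (1 + m ^ 2) + 1 / (1 + k ^ 2) := by
      rw [abs_sub_comm 1]
      exact add_le_add (abs_qhat_sub_one_le m) (abs_qhat_sub_one_le k)

theorem abs_one_div_qhat_mul_le (k κ m : ℝ) :
    |1 / (qhat k * (1 + k ^ 2) * (1 + κ ^ 2) * (1 + m ^ 2))| ≤ 1 / (1 + k ^ 2) := by
  have hk : 1 ≤ qhat k := one_le_qhat k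
  have hκ : 1 ≤ 1 + κ ^ 2 := le_add_of_nonneg_right (sq_nonneg κ)
  have hm : 1 ≤ 1 + m ^ 2 := le_add_of_nonneg_right (sq_nonneg m)
  rw [abs_of_nonneg (by positivity)]
  apply one_div_le_one_div_of_le (by positivity)
  calc 1 + k ^ 2 = 1 * (1 + k ^ 2) * 1 * 1 := by ring
    _ ≤ qhat k * (1 + k ^ 2) * (1 + κ ^ 2) * (1 + m ^ 2) := by gcongr

/-- The limit of the kernel `ζ σ j p k κ m` as `|k|, |m| → ∞` with `κ` fixed: the value obtained by
replacing `qhat k` and `qhat m` by `1` and dropping the last term. -/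
noncomputable def ζLimit (σ j p κ : ℝ) : ℝ :=
  p - j + σ * (1 + j * p) * qhat κ

theorem ζLimit_neg {j : ℝ} (hj : j ^ 2 = 1) (σ κ : ℝ) : ζLimit σ j (-j) κ = -(2 * j) := by
  rw [ζLimit]
  linear_combination -σ * qhat κ * hj

theorem ζ_sub_ζLimit_eq (σ j p k κ m : ℝ) :
    ζ σ j p k κ m - ζLimit σ j p κ =
      p * (qhat m - 1) + σ * j * p * qhat κ * (qhat m / qhat k - 1)
        - j * (1 / qhat k - 1)
        - j * (1 / (qhat k * (1 + k ^ 2) * (1 + κ ^ 2) * (1 + m ^ 2))) := by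
  rw [ζ, ζLimit]
  ring

theorem abs_ζ_sub_ζLimit_le (σ j p k κ m : ℝ) :
    |ζ σ j p k κ m - ζLimit σ j p κ| ≤
      (|p| + |σ * j * p * qhat κ|) * (1 / (1 + m ^ 2))
        + (|σ * j * p * qhat κ| + 2 * |j|) * (1 / (1 + k ^ 2)) := by
  rw [ζ_sub_ζLimit_eq]
  calc _ ≤ |p| * |qhat m - 1| + |σ * j * p * qhat κ| * |qhat m / qhat k - 1|
          + |j| * |1 / qhat k - 1|
          + |j| * |1 / (qhat k * (1 + k ^ 2) * (1 + κ ^ 2) * (1 + m ^ 2))| := by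
        simp only [← abs_mul]
        grw [abs_sub, abs_sub, abs_add_le]
    _ ≤ |p| * (1 / (1 + m ^ 2))
          + |σ * j * p * qhat κ| * (1 / (1 + m ^ 2) + 1 / (1 + k ^ 2))
          + |j| * (1 / (1 + k ^ 2)) + |j| * (1 / (1 + k ^ 2)) := by
        gcongr
        · exact abs_qhat_sub_one_le m
        · exact abs_qhat_div_qhat_sub_one_le m k
        · exact abs_one_div_qhat_sub_one_le k
        · exact abs_one_div_qhat_mul_le k κ m
    _ = _ := by ring

theorem stmt12_general (κ σ j p : ℝ) :
    ∃ C > (0 : ℝ), ∀ k : ℝ,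
      |ζ σ j p k κ (k - κ) - ζLimit σ j p κ| ≤ C / (1 + k ^ 2) := by
  set A := |p| + |σ * j * p * qhat κ|
  set B := |σ * j * p * qhat κ| + 2 * |j|
  refine ⟨A * (2 * (1 + κ ^ 2)) + B + 1, by positivity, fun k => ?_⟩
  calc |ζ σ j p k κ (k - κ) - ζLimit σ j p κ|
      ≤ A * (1 / (1 + (k - κ) ^ 2)) + B * (1 / (1 + k ^ 2)) := abs_ζ_sub_ζLimit_le ..
    _ ≤ A * (2 * (1 + κ ^ 2) / (1 + k ^ 2)) + B * (1 / (1 + k ^ 2)) := by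
      grw [one_div_one_add_sub_sq_le k κ]
    _ = (A * (2 * (1 + κ ^ 2)) + B) / (1 + k ^ 2) := by ring
    _ ≤ (A * (2 * (1 + κ ^ 2)) + B + 1) / (1 + k ^ 2) := by
      gcongr ?_ / _
      exact le_add_of_nonneg_right zero_le_one

theorem stmt12 (κ : ℝ) (j σ : ℝ) (hj : j = 1 ∨ j = -1) (hσ : σ = 1 ∨ σ = -1) :
    ∃ C > (0 : ℝ), ∀ k : ℝ,
      |ζ σ j (-j) k κ (k - κ) + 2 * j| ≤ C / (1 + k ^ 2) := by
  simpa only [ζLimit_neg (sq_eq_one_iff.2 hj), sub_neg_eq_add]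
    using stmt12_general κ σ j (-j)
end

section
/- Let c_g > 0, let F⁺ : ℝ → ℝ be continuously differentiable, and let F⁻ : ℝ → ℝ be continuous. Define h : ℝ × ℝ → ℝ by h(T, X) = (1/(2c_g))·F⁺(X + c_g T)·∫_{X − c_g T}^{X + c_g T} (F⁻(τ))² dτ. Then h(0, X) = 0 for every X ∈ ℝ, h is differentiable in T and X, and for all (T, X) ∈ ℝ × ℝ one has ∂_T h(T, X) − c_g·∂_X h(T, X) = F⁺(X + c_g T)·(F⁻(X − c_g T))². -/
/-- Explicit solution of the transport problem
`[∂_T − c_g ∂_X] h = F⁺(X + c_g T)·(F⁻(X − c_g T))²`, `h|_{T=0} = 0`. -/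
noncomputable def hsol (cg : ℝ) (Fp Fm : ℝ → ℝ) (T X : ℝ) : ℝ :=
  (1 / (2 * cg)) * Fp (X + cg * T) * ∫ τ in (X - cg * T)..(X + cg * T), (Fm τ) ^ 2

/-!
The operator `∂_T - c_g ∂_X` annihilates every differentiable function of `X + c_g T` and sends
`X - c_g T` to `-2 c_g`. Applied to `h`, it therefore only sees the lower limit of integration,
where it produces `2 c_g (F⁻(X - c_g T))²`; the prefactor `1 / (2 c_g)` normalizes this.
-/

theorem hasDerivAt_intervalIntegral_of_continuous {E : Type*} [NormedAddCommGroup E]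
    [NormedSpace ℝ E] [CompleteSpace E] {f : ℝ → E} {a b : ℝ → ℝ} {a' b' s : ℝ}
    (hf : Continuous f) (ha : HasDerivAt a a' s) (hb : HasDerivAt b b' s) :
    HasDerivAt (fun r => ∫ τ in a r..b r, f τ) (b' • f (b s) - a' • f (a s)) s :=
  (intervalIntegral.integral_hasFDerivAt (hf.intervalIntegrable (a s) (b s))
    (hf.stronglyMeasurableAtFilter _ _) (hf.stronglyMeasurableAtFilter _ _)
    hf.continuousAt hf.continuousAt).comp_hasDerivAt (f := fun r => (a r, b r)) s (ha.prodMk hb)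

section hsol

variable {cg : ℝ} {Fp Fm : ℝ → ℝ}

theorem hsol_zero_time (X : ℝ) : hsol cg Fp Fm 0 X = 0 := by
  simp [hsol]

theorem hasDerivAt_hsol_comp {T X : ℝ → ℝ} {Fp' T' X' s : ℝ}
    (hFp : HasDerivAt Fp Fp' (X s + cg * T s)) (hFm : Continuous Fm)
    (hT : HasDerivAt T T' s) (hX : HasDerivAt X X' s) :
    HasDerivAt (fun r => hsol cg Fp Fm (T r) (X r))
      (1 / (2 * cg) * (Fp' * (X' + cg * T')) *
          (∫ τ in (X s - cg * T s)..(X s + cg * T s), Fm τ ^ 2) +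
        1 / (2 * cg) * Fp (X s + cg * T s) *
          ((X' + cg * T') * Fm (X s + cg * T s) ^ 2 -
            (X' - cg * T') * Fm (X s - cg * T s) ^ 2)) s := by
  have h_upper : HasDerivAt (fun r => X r + cg * T r) (X' + cg * T') s := hX.add (hT.const_mul cg)
  have h_lower : HasDerivAt (fun r => X r - cg * T r) (X' - cg * T') s := hX.sub (hT.const_mul cg)
  exact ((hFp.comp s h_upper).const_mul (1 / (2 * cg))).mul
    (hasDerivAt_intervalIntegral_of_continuous (hFm.pow 2) h_lower h_upper)

theorem stmt13_general (hcg : cg ≠ 0) (hFp : Differentiable ℝ Fp) (hFm : Continuous Fm) :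
    (∀ X : ℝ, hsol cg Fp Fm 0 X = 0) ∧
    (∀ T X : ℝ, DifferentiableAt ℝ (fun t => hsol cg Fp Fm t X) T ∧
      DifferentiableAt ℝ (fun x => hsol cg Fp Fm T x) X) ∧
    (∀ T X : ℝ,
      deriv (fun t => hsol cg Fp Fm t X) T
        - cg * deriv (fun x => hsol cg Fp Fm T x) X
      = Fp (X + cg * T) * (Fm (X - cg * T)) ^ 2) := by
  have h_time (T X : ℝ) :=
    hasDerivAt_hsol_comp (hFp (X + cg * T)).hasDerivAt hFm (hasDerivAt_id' T) (hasDerivAt_const T X)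
  have h_space (T X : ℝ) :=
    hasDerivAt_hsol_comp (hFp (X + cg * T)).hasDerivAt hFm (hasDerivAt_const X T) (hasDerivAt_id' X)
  refine ⟨hsol_zero_time,
    fun T X => ⟨(h_time T X).differentiableAt, (h_space T X).differentiableAt⟩, fun T X => ?_⟩
  rw [(h_time T X).deriv, (h_space T X).deriv]
  calc
    _ = 1 / (2 * cg) * Fp (X + cg * T) * (2 * cg * Fm (X - cg * T) ^ 2) := by ring
    _ = Fp (X + cg * T) * Fm (X - cg * T) ^ 2 := by field_simp

end hsol

theorem stmt13 (cg : ℝ) (hcg : 0 < cg) (Fp Fm : ℝ → ℝ)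
    (hFp : ContDiff ℝ 1 Fp) (hFm : Continuous Fm) :
    (∀ X : ℝ, hsol cg Fp Fm 0 X = 0) ∧
    (∀ T X : ℝ, DifferentiableAt ℝ (fun t => hsol cg Fp Fm t X) T ∧
      DifferentiableAt ℝ (fun x => hsol cg Fp Fm T x) X) ∧
    (∀ T X : ℝ,
      deriv (fun t => hsol cg Fp Fm t X) T
        - cg * deriv (fun x => hsol cg Fp Fm T x) X
      = Fp (X + cg * T) * (Fm (X - cg * T)) ^ 2) :=
  stmt13_general hcg.ne' (hFp.differentiable one_ne_zero) hFm
end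

section
/- Let c_g > 0 and let F⁺, F⁻ : ℝ → ℝ be measurable functions with (F⁺)² and (F⁻)² integrable on ℝ. Define h(T, X) = (1/(2c_g))·F⁺(X + c_g T)·∫_{X − c_g T}^{X + c_g T} (F⁻(τ))² dτ. Then for every T ∈ ℝ the function X ↦ h(T, X)² is integrable and ∫_ℝ h(T, X)² dX ≤ (1/(2c_g))²·(∫_ℝ (F⁺(x))² dx)·(∫_ℝ (F⁻(x))² dx)². -/
open MeasureTheory

section IntervalIntegral

variable {E : Type*} [NormedAddCommGroup E] [NormedSpace ℝ E] {μ : Measure ℝ} {g : ℝ → E}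

theorem norm_intervalIntegral_le_integral_norm (hg : Integrable g μ) (a b : ℝ) :
    ‖∫ t in a..b, g t ∂μ‖ ≤ ∫ t, ‖g t‖ ∂μ :=
  intervalIntegral.norm_integral_le_integral_norm_uIoc.trans <|
    setIntegral_le_integral hg.norm (.of_forall fun _ => norm_nonneg _)

theorem stronglyMeasurable_intervalIntegral {α : Type*} [MeasurableSpace α] [NullSingletonClass μ]
    (hg : Integrable g μ) {a b : α → ℝ} (ha : Measurable a) (hb : Measurable b) :
    StronglyMeasurable fun x => ∫ t in (a x)..(b x), g t ∂μ := by
  have hprim : StronglyMeasurable fun x => ∫ t in (0 : ℝ)..x, g t ∂μ :=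
    (intervalIntegral.continuous_primitive (fun _ _ => hg.intervalIntegrable) 0).stronglyMeasurable
  have hsub (x : α) : (∫ t in (0 : ℝ)..(b x), g t ∂μ) - ∫ t in (0 : ℝ)..(a x), g t ∂μ =
      ∫ t in (a x)..(b x), g t ∂μ :=
    intervalIntegral.integral_interval_sub_left hg.intervalIntegrable hg.intervalIntegrable
  simp only [← hsub]
  exact (hprim.comp_measurable hb).sub (hprim.comp_measurable ha)

end IntervalIntegral

section BoundedMultiplier

variable {α : Type*} [MeasurableSpace α] {μ : Measure α} {f ψ : α → ℝ} {M : ℝ}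

/- Only `f ^ 2` is known to be measurable, so Hölder's inequality for `MemLp` does not apply to `f`;
the product is estimated after squaring. -/
theorem integrable_sq_mul_of_bound (hf : Integrable (fun x => f x ^ 2) μ)
    (hψ : AEStronglyMeasurable ψ μ) (hM : ∀ᵐ x ∂μ, ‖ψ x‖ ≤ M) :
    Integrable (fun x => (f x * ψ x) ^ 2) μ := by
  have hM2 : ∀ᵐ x ∂μ, ‖ψ x ^ 2‖ ≤ M ^ 2 := by
    filter_upwards [hM] with x hx
    rw [norm_pow]
    gcongr
  simpa only [mul_pow, Pi.pow_apply] using hf.mul_bdd (hψ.pow 2) hM2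

theorem integral_sq_mul_le_of_bound (hf : Integrable (fun x => f x ^ 2) μ)
    (hψ : AEStronglyMeasurable ψ μ) (hM : ∀ᵐ x ∂μ, ‖ψ x‖ ≤ M) :
    ∫ x, (f x * ψ x) ^ 2 ∂μ ≤ (∫ x, f x ^ 2 ∂μ) * M ^ 2 := by
  rw [← integral_mul_const]
  refine integral_mono_ae (integrable_sq_mul_of_bound hf hψ hM) (hf.mul_const _) ?_
  filter_upwards [hM] with x hx
  rw [mul_pow, ← sq_abs (ψ x), ← Real.norm_eq_abs]
  gcongr

end BoundedMultiplier

theorem stmt14_general {F g a b : ℝ → ℝ} (hF : Integrable fun x => F x ^ 2) (hg : Integrable g)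
    (ha : Measurable a) (hb : Measurable b) (k r : ℝ) :
    Integrable (fun x => (k * F (x + r) * ∫ t in (a x)..(b x), g t) ^ 2) ∧
    ∫ x, (k * F (x + r) * ∫ t in (a x)..(b x), g t) ^ 2 ≤
      k ^ 2 * (∫ x, F x ^ 2) * (∫ t, ‖g t‖) ^ 2 := by
  have hkF : Integrable fun x => (k * F (x + r)) ^ 2 := by
    simpa only [mul_pow] using (hF.comp_add_right r).const_mul (k ^ 2)
  have hkF_integral : ∫ x, (k * F (x + r)) ^ 2 = k ^ 2 * ∫ x, F x ^ 2 := by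
    simp only [mul_pow, integral_const_mul, integral_add_right_eq_self fun x => F x ^ 2]
  have hmeas := (stronglyMeasurable_intervalIntegral hg ha hb).aestronglyMeasurable (μ := volume)
  have hbound : ∀ᵐ x, ‖∫ t in (a x)..(b x), g t‖ ≤ ∫ t, ‖g t‖ :=
    .of_forall fun x => norm_intervalIntegral_le_integral_norm hg (a x) (b x)
  rw [← hkF_integral]
  exact ⟨integrable_sq_mul_of_bound hkF hmeas hbound, integral_sq_mul_le_of_bound hkF hmeas hbound⟩

theorem stmt14 (cg : ℝ) (hcg : 0 < cg) (Fp Fm : ℝ → ℝ)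
    (hFpm : Measurable Fp) (hFmm : Measurable Fm)
    (hFp2 : Integrable (fun x => (Fp x) ^ 2))
    (hFm2 : Integrable (fun x => (Fm x) ^ 2)) (T : ℝ) :
    Integrable (fun X => (hsol cg Fp Fm T X) ^ 2) ∧
    ∫ X, (hsol cg Fp Fm T X) ^ 2 ≤
      (1 / (2 * cg)) ^ 2 * (∫ x, (Fp x) ^ 2) * (∫ x, (Fm x) ^ 2) ^ 2 := by
  simpa only [hsol, id, norm_pow, Real.norm_eq_abs, sq_abs] using stmt14_general hFp2 hFm2
    (measurable_id.sub_const (cg * T)) (measurable_id.add_const (cg * T)) (1 / (2 * cg)) (cg * T)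
end

section
/- Let c_g > 0, let F⁻ : ℝ → ℝ be continuously differentiable, and let F⁺ : ℝ → ℝ be continuous. Define h̃(T, X) = (1/(2c_g))·F⁻(X − c_g T)·∫_{X − c_g T}^{X + c_g T} (F⁺(τ))² dτ. Then h̃(0, X) = 0 for every X, and ∂_T h̃(T, X) + c_g·∂_X h̃(T, X) = F⁻(X − c_g T)·(F⁺(X + c_g T))² for all (T, X); moreover, if in addition (F⁺)² and (F⁻)² are integrable on ℝ, then for every T ∈ ℝ one has ∫_ℝ h̃(T, X)² dX ≤ (1/(2c_g))²·(∫_ℝ (F⁻(x))² dx)·(∫_ℝ (F⁺(x))² dx)². -/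
open MeasureTheory

/-- Explicit solution of the transport problem
`[∂_T + c_g ∂_X] h̃ = F⁻(X − c_g T)·(F⁺(X + c_g T))²`, `h̃|_{T=0} = 0`. -/
noncomputable def htilde (cg : ℝ) (Fp Fm : ℝ → ℝ) (T X : ℝ) : ℝ :=
  (1 / (2 * cg)) * Fm (X - cg * T) * ∫ τ in (X - cg * T)..(X + cg * T), (Fp τ) ^ 2

/-!
The operator `∂_T + c_g ∂_X` is the derivative in the direction `(1, c_g)`. Along the
characteristic `s ↦ (T + s, X + c_g s)` the quantity `X - c_g T` is constant, so only the upper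
endpoint of the integral moves, at speed `2 c_g`; the fundamental theorem of calculus does the rest.
For the `L²` bound, the inner integral is at most `∫ (F⁺)²` uniformly in `(T, X)`, and what is left
is a translate of `F⁻`.
-/

section Calculus

theorem lineDeriv_uncurry_eq_smul_deriv_add_smul_deriv {𝕜 E : Type*} [NontriviallyNormedField 𝕜]
    [NormedAddCommGroup E] [NormedSpace 𝕜 E] {u : 𝕜 → 𝕜 → E} {x y : 𝕜}
    (hu : DifferentiableAt 𝕜 (Function.uncurry u) (x, y)) (a b : 𝕜) :
    lineDeriv 𝕜 (Function.uncurry u) (x, y) (a, b) =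
      a • deriv (fun x' => u x' y) x + b • deriv (fun y' => u x y') y := by
  have hx : deriv (fun x' => u x' y) x = fderiv 𝕜 (Function.uncurry u) (x, y) (1, 0) :=
    (HasFDerivAt.comp_hasDerivAt (f := fun x' => (x', y)) x hu.hasFDerivAt
      ((hasDerivAt_id' x).prodMk (hasDerivAt_const x y))).deriv
  have hy : deriv (fun y' => u x y') y = fderiv 𝕜 (Function.uncurry u) (x, y) (0, 1) :=
    (HasFDerivAt.comp_hasDerivAt (f := fun y' => (x, y')) y hu.hasFDerivAt
      ((hasDerivAt_const y x).prodMk (hasDerivAt_id' y))).deriv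
  rw [hu.lineDeriv_eq_fderiv, hx, hy, ← map_smul, ← map_smul, ← map_add]
  simp

variable {E : Type*} [NormedAddCommGroup E] [NormedSpace ℝ E]

theorem differentiable_intervalIntegral_of_continuous [CompleteSpace E] {V : Type*}
    [NormedAddCommGroup V] [NormedSpace ℝ V] {f : ℝ → E} (hf : Continuous f) {a b : V → ℝ}
    (ha : Differentiable ℝ a) (hb : Differentiable ℝ b) :
    Differentiable ℝ fun p => ∫ τ in (a p)..(b p), f τ := by
  have hint : Differentiable ℝ fun q : ℝ × ℝ => ∫ τ in q.1..q.2, f τ := fun q =>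
    (intervalIntegral.integral_hasFDerivAt (hf.intervalIntegrable q.1 q.2)
      (hf.stronglyMeasurableAtFilter _ _) (hf.stronglyMeasurableAtFilter _ _)
      hf.continuousAt hf.continuousAt).differentiableAt
  exact hint.comp (ha.prodMk hb)

theorem norm_intervalIntegral_le_integral_norm_s15 {μ : Measure ℝ} {f : ℝ → E} (hf : Integrable f μ)
    (a b : ℝ) : ‖∫ τ in a..b, f τ ∂μ‖ ≤ ∫ τ, ‖f τ‖ ∂μ :=
  intervalIntegral.norm_integral_le_integral_norm_uIoc.trans
    (setIntegral_le_integral hf.norm (.of_forall fun _ => norm_nonneg _))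

end Calculus

section Transport

variable {cg : ℝ} {Fp Fm : ℝ → ℝ}

theorem htilde_zero_left (cg : ℝ) (Fp Fm : ℝ → ℝ) (X : ℝ) : htilde cg Fp Fm 0 X = 0 := by
  simp [htilde]

theorem differentiable_uncurry_htilde (hFm : Differentiable ℝ Fm)
    (hFp : Continuous fun τ => Fp τ ^ 2) :
    Differentiable ℝ (Function.uncurry (htilde cg Fp Fm)) := by
  have hleft : Differentiable ℝ fun p : ℝ × ℝ => p.2 - cg * p.1 := by fun_prop
  have hright : Differentiable ℝ fun p : ℝ × ℝ => p.2 + cg * p.1 := by fun_prop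
  exact ((hFm.comp hleft).const_mul _).mul
    (differentiable_intervalIntegral_of_continuous hFp hleft hright)

theorem htilde_along_characteristic (cg : ℝ) (Fp Fm : ℝ → ℝ) (T X s : ℝ) :
    htilde cg Fp Fm (T + s) (X + cg * s) =
      1 / (2 * cg) * Fm (X - cg * T) *
        ∫ τ in (X - cg * T)..(X + cg * T + 2 * cg * s), Fp τ ^ 2 := by
  have hleft : X + cg * s - cg * (T + s) = X - cg * T := by ring
  have hright : X + cg * s + cg * (T + s) = X + cg * T + 2 * cg * s := by ring
  rw [htilde, hleft, hright]

theorem hasLineDerivAt_uncurry_htilde (hcg : cg ≠ 0) (Fm : ℝ → ℝ)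
    (hFp : Continuous fun τ => Fp τ ^ 2) (T X : ℝ) :
    HasLineDerivAt ℝ (Function.uncurry (htilde cg Fp Fm))
      (Fm (X - cg * T) * Fp (X + cg * T) ^ 2) (T, X) (1, cg) := by
  have hend : HasDerivAt (fun s => X + cg * T + 2 * cg * s) (2 * cg) 0 := by
    simpa using ((hasDerivAt_id (0 : ℝ)).const_mul (2 * cg)).const_add (X + cg * T)
  have hint : HasDerivAt (fun s => ∫ τ in (X - cg * T)..(X + cg * T + 2 * cg * s), Fp τ ^ 2)
      (Fp (X + cg * T) ^ 2 * (2 * cg)) 0 := by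
    have hprim := (hFp.integral_hasStrictDerivAt (X - cg * T) (X + cg * T)).hasDerivAt
    exact hprim.comp_of_eq 0 hend (by simp)
  have hcurve (s : ℝ) : Function.uncurry (htilde cg Fp Fm) ((T, X) + s • (1, cg)) =
      1 / (2 * cg) * Fm (X - cg * T) *
        ∫ τ in (X - cg * T)..(X + cg * T + 2 * cg * s), Fp τ ^ 2 := by
    simpa [mul_comm s] using htilde_along_characteristic cg Fp Fm T X s
  rw [HasLineDerivAt, funext hcurve]
  refine (hint.const_mul (1 / (2 * cg) * Fm (X - cg * T))).congr_deriv ?_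
  field_simp

theorem deriv_htilde_add_mul_deriv_htilde (hcg : cg ≠ 0) (hFm : Differentiable ℝ Fm)
    (hFp : Continuous fun τ => Fp τ ^ 2) (T X : ℝ) :
    deriv (fun t => htilde cg Fp Fm t X) T + cg * deriv (fun x => htilde cg Fp Fm T x) X =
      Fm (X - cg * T) * Fp (X + cg * T) ^ 2 := by
  rw [← (hasLineDerivAt_uncurry_htilde hcg Fm hFp T X).lineDeriv,
    lineDeriv_uncurry_eq_smul_deriv_add_smul_deriv (differentiable_uncurry_htilde hFm hFp (T, X)),
    one_smul, smul_eq_mul]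

end Transport

section Estimate

variable {Fp Fm : ℝ → ℝ}

theorem sq_htilde_le (cg : ℝ) (Fm : ℝ → ℝ) (hFp : Integrable fun x => Fp x ^ 2) (T X : ℝ) :
    htilde cg Fp Fm T X ^ 2 ≤
      (1 / (2 * cg)) ^ 2 * Fm (X - cg * T) ^ 2 * (∫ x, Fp x ^ 2) ^ 2 := by
  have habs : |∫ τ in (X - cg * T)..(X + cg * T), Fp τ ^ 2| ≤ ∫ x, Fp x ^ 2 := by
    simpa using norm_intervalIntegral_le_integral_norm_s15 hFp (X - cg * T) (X + cg * T)
  rw [htilde, mul_pow, mul_pow]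
  exact mul_le_mul_of_nonneg_left (sq_le_sq.2 (habs.trans (le_abs_self _))) (by positivity)

theorem integral_sq_htilde_le (cg : ℝ) (hFp : Integrable fun x => Fp x ^ 2)
    (hFm : Integrable fun x => Fm x ^ 2) (T : ℝ) :
    ∫ X, htilde cg Fp Fm T X ^ 2 ≤
      (1 / (2 * cg)) ^ 2 * (∫ x, Fm x ^ 2) * (∫ x, Fp x ^ 2) ^ 2 :=
  calc
    ∫ X, htilde cg Fp Fm T X ^ 2
      ≤ ∫ X, (1 / (2 * cg)) ^ 2 * Fm (X - cg * T) ^ 2 * (∫ x, Fp x ^ 2) ^ 2 :=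
        integral_mono_of_nonneg (.of_forall fun _ => sq_nonneg _)
          (((hFm.comp_sub_right (cg * T)).const_mul _).mul_const _)
          (.of_forall (sq_htilde_le cg Fm hFp T))
    _ = (1 / (2 * cg)) ^ 2 * (∫ X, Fm (X - cg * T) ^ 2) * (∫ x, Fp x ^ 2) ^ 2 := by
        rw [integral_mul_const, integral_const_mul]
    _ = (1 / (2 * cg)) ^ 2 * (∫ x, Fm x ^ 2) * (∫ x, Fp x ^ 2) ^ 2 := by
        rw [integral_sub_right_eq_self (fun x => Fm x ^ 2) (cg * T)]

end Estimate

theorem stmt15_general (cg : ℝ) (hcg : cg ≠ 0) (Fp Fm : ℝ → ℝ)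
    (hFm : Differentiable ℝ Fm) (hFp : Continuous fun τ => Fp τ ^ 2) :
    (∀ X : ℝ, htilde cg Fp Fm 0 X = 0) ∧
    (∀ T X : ℝ,
      deriv (fun t => htilde cg Fp Fm t X) T
        + cg * deriv (fun x => htilde cg Fp Fm T x) X
      = Fm (X - cg * T) * (Fp (X + cg * T)) ^ 2) ∧
    ((Integrable fun x => (Fp x) ^ 2) → (Integrable fun x => (Fm x) ^ 2) →
      ∀ T : ℝ, ∫ X, (htilde cg Fp Fm T X) ^ 2 ≤
        (1 / (2 * cg)) ^ 2 * (∫ x, (Fm x) ^ 2) * (∫ x, (Fp x) ^ 2) ^ 2) :=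
  ⟨htilde_zero_left cg Fp Fm, deriv_htilde_add_mul_deriv_htilde hcg hFm hFp,
    integral_sq_htilde_le cg⟩

theorem stmt15 (cg : ℝ) (hcg : 0 < cg) (Fp Fm : ℝ → ℝ)
    (hFm : ContDiff ℝ 1 Fm) (hFp : Continuous Fp) :
    (∀ X : ℝ, htilde cg Fp Fm 0 X = 0) ∧
    (∀ T X : ℝ,
      deriv (fun t => htilde cg Fp Fm t X) T
        + cg * deriv (fun x => htilde cg Fp Fm T x) X
      = Fm (X - cg * T) * (Fp (X + cg * T)) ^ 2) ∧
    ((Integrable fun x => (Fp x) ^ 2) → (Integrable fun x => (Fm x) ^ 2) →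
      ∀ T : ℝ, ∫ X, (htilde cg Fp Fm T X) ^ 2 ≤
        (1 / (2 * cg)) ^ 2 * (∫ x, (Fm x) ^ 2) * (∫ x, (Fp x) ^ 2) ^ 2) :=
  stmt15_general cg hcg.ne' Fp Fm (hFm.differentiable one_ne_zero) (hFp.pow 2)
end

section
/- (Sobolev estimate of Lemma 3.3) Let s ≥ 1 be a natural number and c_g > 0. There exists a constant C > 0, depending only on c_g and s, with the following property: whenever F⁺, F⁻ : ℝ → ℝ are s-times continuously differentiable and for every natural j ≤ s the j-th iterated derivatives of F⁺ and F⁻ are square-integrable on ℝ, the function h(T, X) = (1/(2c_g))·F⁺(X + c_g T)·∫_{X − c_g T}^{X + c_g T} (F⁻(τ))² dτ satisfies, for every T ∈ ℝ, Σ_{j=0}^{s} ∫_ℝ (∂_X^j h(T, X))² dX ≤ C·(Σ_{j=0}^{s} ∫_ℝ (iteratedDeriv j F⁺ (x))² dx)·(Σ_{j=0}^{s} ∫_ℝ (iteratedDeriv j F⁻ (x))² dx)². -/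
open MeasureTheory

/-!
Differentiation commutes with integration over a moving window, so the `i`-th derivative of
`∫_{X - a}^{X + a} (F⁻)²` is the window integral of the `i`-th derivative of `(F⁻)²`. By the Leibniz
rule and Cauchy–Schwarz the latter is in `L¹`, with norm at most `2 ^ i ‖F⁻‖²_{H^s}`. Hence the
window integral has bounded derivatives, uniformly in `a`, and multiplication by such a function is
bounded on `H^s`; no Sobolev embedding is needed.
-/

section JetNormSq

variable {E : Type*} [NormedAddCommGroup E] [NormedSpace ℝ E] {f : ℝ → E} {n j : ℕ}

/-- The squared Euclidean norm of the `n`-jet `(f x, f' x, …, f⁽ⁿ⁾ x)`, which is the density of the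
squared `H^n`-norm of `f`. -/
noncomputable def jetNormSq (n : ℕ) (f : ℝ → E) (x : ℝ) : ℝ :=
  ∑ j ∈ Finset.range (n + 1), ‖iteratedDeriv j f x‖ ^ 2

lemma jetNormSq_nonneg (n : ℕ) (f : ℝ → E) (x : ℝ) : 0 ≤ jetNormSq n f x :=
  Finset.sum_nonneg fun _ _ => sq_nonneg _

lemma sq_norm_iteratedDeriv_le_jetNormSq (hj : j ≤ n) (f : ℝ → E) (x : ℝ) :
    ‖iteratedDeriv j f x‖ ^ 2 ≤ jetNormSq n f x :=
  Finset.single_le_sum (f := fun j => ‖iteratedDeriv j f x‖ ^ 2) (fun _ _ => sq_nonneg _)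
    (Finset.mem_range_succ_iff.2 hj)

lemma jetNormSq_le_of_sq_norm_iteratedDeriv_le {x M : ℝ}
    (h : ∀ j ≤ n, ‖iteratedDeriv j f x‖ ^ 2 ≤ M) : jetNormSq n f x ≤ (n + 1) * M := by
  simpa [jetNormSq] using Finset.sum_le_card_nsmul (Finset.range (n + 1)) _ M
    fun j hj => h j (Finset.mem_range_succ_iff.1 hj)

lemma continuous_jetNormSq (hf : ContDiff ℝ n f) : Continuous (jetNormSq n f) :=
  continuous_finsetSum _ fun j hj => ((hf.continuous_iteratedDeriv j
    (by exact_mod_cast Finset.mem_range_succ_iff.1 hj)).norm).pow 2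

lemma jetNormSq_comp_add_const (n : ℕ) (f : ℝ → E) (a : ℝ) :
    jetNormSq n (fun x => f (x + a)) = fun x => jetNormSq n f (x + a) := by
  ext x
  simp only [jetNormSq, iteratedDeriv_comp_add_const]

lemma jetNormSq_const_smul (n : ℕ) (c : ℝ) (f : ℝ → E) :
    jetNormSq n (c • f) = fun x => c ^ 2 * jetNormSq n f x := by
  ext x
  simp only [jetNormSq, iteratedDeriv_const_smul_field, norm_smul, mul_pow, Real.norm_eq_abs,
    sq_abs, Finset.mul_sum]

end JetNormSq

section Leibniz

variable {𝔸 : Type*} [NormedRing 𝔸] [NormedAlgebra ℝ 𝔸] {f g : ℝ → 𝔸} {n j : ℕ}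

lemma norm_iteratedDeriv_mul_le_sqrt_jetNormSq (hf : ContDiff ℝ n f) (hg : ContDiff ℝ n g)
    (hj : j ≤ n) (x : ℝ) :
    ‖iteratedDeriv j (f * g) x‖ ≤ 2 ^ j * √(jetNormSq n f x * jetNormSq n g x) := by
  have leibniz := norm_iteratedFDeriv_mul_le hf hg x (n := j) (by exact_mod_cast hj)
  simp only [norm_iteratedFDeriv_eq_norm_iteratedDeriv] at leibniz
  have term_le (i : ℕ) (hi : i ∈ Finset.range (j + 1)) :
      ‖iteratedDeriv i f x‖ * ‖iteratedDeriv (j - i) g x‖ ≤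
        √(jetNormSq n f x * jetNormSq n g x) := by
    apply Real.le_sqrt_of_sq_le
    rw [mul_pow]
    exact mul_le_mul
      (sq_norm_iteratedDeriv_le_jetNormSq ((Finset.mem_range_succ_iff.1 hi).trans hj) f x)
      (sq_norm_iteratedDeriv_le_jetNormSq ((Nat.sub_le j i).trans hj) g x)
      (sq_nonneg _) (jetNormSq_nonneg n f x)
  calc ‖iteratedDeriv j (f * g) x‖
      ≤ ∑ i ∈ Finset.range (j + 1),
          j.choose i * ‖iteratedDeriv i f x‖ * ‖iteratedDeriv (j - i) g x‖ := leibniz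
    _ ≤ ∑ i ∈ Finset.range (j + 1), j.choose i * √(jetNormSq n f x * jetNormSq n g x) :=
        Finset.sum_le_sum fun i hi => by
          rw [mul_assoc]
          exact mul_le_mul_of_nonneg_left (term_le i hi) (Nat.cast_nonneg _)
    _ = 2 ^ j * √(jetNormSq n f x * jetNormSq n g x) := by
        rw [← Finset.sum_mul, ← Nat.cast_sum, Nat.sum_range_choose, Nat.cast_pow, Nat.cast_ofNat]

lemma norm_iteratedDeriv_sq_le_jetNormSq (hf : ContDiff ℝ n f) (hj : j ≤ n) (x : ℝ) :
    ‖iteratedDeriv j (f ^ 2) x‖ ≤ 2 ^ j * jetNormSq n f x := by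
  simpa only [sq, Real.sqrt_mul_self (jetNormSq_nonneg n f x)] using
    norm_iteratedDeriv_mul_le_sqrt_jetNormSq hf hf hj x

lemma jetNormSq_mul_le (hf : ContDiff ℝ n f) (hg : ContDiff ℝ n g) (x : ℝ) :
    jetNormSq n (f * g) x ≤ (n + 1) * (4 ^ n * (jetNormSq n f x * jetNormSq n g x)) := by
  have hfg : 0 ≤ jetNormSq n f x * jetNormSq n g x :=
    mul_nonneg (jetNormSq_nonneg n f x) (jetNormSq_nonneg n g x)
  refine jetNormSq_le_of_sq_norm_iteratedDeriv_le fun j hj => ?_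
  calc ‖iteratedDeriv j (f * g) x‖ ^ 2
      ≤ (2 ^ j * √(jetNormSq n f x * jetNormSq n g x)) ^ 2 := by
        gcongr
        exact norm_iteratedDeriv_mul_le_sqrt_jetNormSq hf hg hj x
    _ = 4 ^ j * (jetNormSq n f x * jetNormSq n g x) := by
        rw [mul_pow, Real.sq_sqrt hfg, pow_right_comm]
        norm_num
    _ ≤ 4 ^ n * (jetNormSq n f x * jetNormSq n g x) := by
        gcongr
        norm_num

end Leibniz

section Sobolev

variable {E : Type*} [NormedAddCommGroup E] [NormedSpace ℝ E] {f : ℝ → E} {n : ℕ}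

/-- Membership in `C^n ∩ H^n`, the classical version of the Sobolev space `H^n` of the line: all
derivatives of order at most `n` are continuous and square-integrable. -/
structure MemSobolev (n : ℕ) (f : ℝ → E) : Prop where
  contDiff : ContDiff ℝ n f
  integrable : Integrable (jetNormSq n f)

/-- The squared `H^n`-norm. It takes the junk value `0` when `jetNormSq n f` is not integrable, so
it is meaningful only under `MemSobolev n f`. -/
noncomputable def sobolevSq (n : ℕ) (f : ℝ → E) : ℝ :=
  ∫ x, jetNormSq n f x

lemma memSobolev_iff :
    MemSobolev n f ↔
      ContDiff ℝ n f ∧ ∀ j ≤ n, Integrable fun x => ‖iteratedDeriv j f x‖ ^ 2 := by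
  refine ⟨fun h => ⟨h.contDiff, fun j hj => ?_⟩, fun ⟨hf, hint⟩ => ⟨hf, ?_⟩⟩
  · have hcont := h.contDiff.continuous_iteratedDeriv j (by exact_mod_cast hj)
    refine h.integrable.mono' (hcont.norm.pow 2).aestronglyMeasurable (.of_forall fun x => ?_)
    rw [norm_pow, norm_norm]
    exact sq_norm_iteratedDeriv_le_jetNormSq hj f x
  · exact integrable_finsetSum _ fun j hj => hint j (Finset.mem_range_succ_iff.1 hj)

lemma MemSobolev.sobolevSq_eq_sum (hf : MemSobolev n f) :
    sobolevSq n f = ∑ j ∈ Finset.range (n + 1), ∫ x, ‖iteratedDeriv j f x‖ ^ 2 :=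
  integral_finsetSum _ fun j hj => (memSobolev_iff.1 hf).2 j (Finset.mem_range_succ_iff.1 hj)

lemma MemSobolev.comp_add_const (hf : MemSobolev n f) (a : ℝ) :
    MemSobolev n fun x => f (x + a) where
  contDiff := hf.contDiff.comp (contDiff_id.add contDiff_const)
  integrable := by
    rw [jetNormSq_comp_add_const]
    exact hf.integrable.comp_add_right a

lemma sobolevSq_comp_add_const (n : ℕ) (f : ℝ → E) (a : ℝ) :
    sobolevSq n (fun x => f (x + a)) = sobolevSq n f := by
  rw [sobolevSq, jetNormSq_comp_add_const]
  exact integral_add_right_eq_self (jetNormSq n f) a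

lemma MemSobolev.const_smul (hf : MemSobolev n f) (c : ℝ) : MemSobolev n (c • f) where
  contDiff := hf.contDiff.const_smul c
  integrable := by
    rw [jetNormSq_const_smul]
    exact hf.integrable.const_mul _

lemma sobolevSq_const_smul (n : ℕ) (c : ℝ) (f : ℝ → E) :
    sobolevSq n (c • f) = c ^ 2 * sobolevSq n f := by
  rw [sobolevSq, jetNormSq_const_smul, integral_const_mul, sobolevSq]

end Sobolev

section SobolevMul

variable {𝔸 : Type*} [NormedRing 𝔸] [NormedAlgebra ℝ 𝔸] {f g : ℝ → 𝔸} {n j : ℕ} {M : ℝ}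

lemma MemSobolev.integrable_iteratedDeriv_sq (hf : MemSobolev n f) (hj : j ≤ n) :
    Integrable (iteratedDeriv j (f ^ 2)) :=
  (hf.integrable.const_mul (2 ^ j)).mono'
    ((hf.contDiff.pow 2).continuous_iteratedDeriv j (by exact_mod_cast hj)).aestronglyMeasurable
    (.of_forall (norm_iteratedDeriv_sq_le_jetNormSq hf.contDiff hj))

lemma MemSobolev.integral_norm_iteratedDeriv_sq_le (hf : MemSobolev n f) (hj : j ≤ n) :
    ∫ x, ‖iteratedDeriv j (f ^ 2) x‖ ≤ 2 ^ j * sobolevSq n f := by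
  rw [sobolevSq, ← integral_const_mul]
  exact integral_mono (hf.integrable_iteratedDeriv_sq hj).norm (hf.integrable.const_mul _)
    (norm_iteratedDeriv_sq_le_jetNormSq hf.contDiff hj)

lemma jetNormSq_mul_le_of_jetNormSq_le (hf : ContDiff ℝ n f) (hg : ContDiff ℝ n g) {x : ℝ}
    (hM : jetNormSq n g x ≤ M) :
    jetNormSq n (f * g) x ≤ (n + 1) * 4 ^ n * M * jetNormSq n f x :=
  calc jetNormSq n (f * g) x
      ≤ (n + 1) * (4 ^ n * (jetNormSq n f x * jetNormSq n g x)) := jetNormSq_mul_le hf hg x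
    _ ≤ (n + 1) * (4 ^ n * (jetNormSq n f x * M)) := by
        have := jetNormSq_nonneg n f x
        gcongr
    _ = (n + 1) * 4 ^ n * M * jetNormSq n f x := by ring

lemma MemSobolev.mul_of_jetNormSq_le (hf : MemSobolev n f) (hg : ContDiff ℝ n g)
    (hM : ∀ x, jetNormSq n g x ≤ M) : MemSobolev n (f * g) where
  contDiff := hf.contDiff.mul hg
  integrable := by
    refine (hf.integrable.const_mul ((n + 1) * 4 ^ n * M)).mono'
      (continuous_jetNormSq (hf.contDiff.mul hg)).aestronglyMeasurable (.of_forall fun x => ?_)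
    rw [Real.norm_of_nonneg (jetNormSq_nonneg n _ x)]
    exact jetNormSq_mul_le_of_jetNormSq_le hf.contDiff hg (hM x)

lemma MemSobolev.sobolevSq_mul_le (hf : MemSobolev n f) (hg : ContDiff ℝ n g)
    (hM : ∀ x, jetNormSq n g x ≤ M) :
    sobolevSq n (f * g) ≤ (n + 1) * 4 ^ n * M * sobolevSq n f := by
  rw [sobolevSq, sobolevSq, ← integral_const_mul]
  exact integral_mono (hf.mul_of_jetNormSq_le hg hM).integrable (hf.integrable.const_mul _)
    fun x => jetNormSq_mul_le_of_jetNormSq_le hf.contDiff hg (hM x)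

end SobolevMul

section WindowIntegral

variable {E : Type*} [NormedAddCommGroup E] [NormedSpace ℝ E] {g : ℝ → E}

/-- The integral of `g` over the moving window `[x - a, x + b]`, as a function of `x`; it is an
oriented integral, so no sign condition on `a` and `b` is imposed. -/
noncomputable def windowIntegral (a b : ℝ) (g : ℝ → E) (x : ℝ) : E :=
  ∫ t in (x - a)..(x + b), g t

lemma norm_windowIntegral_le (hg : Integrable g) (a b x : ℝ) :
    ‖windowIntegral a b g x‖ ≤ ∫ t, ‖g t‖ :=
  intervalIntegral.norm_integral_le_integral_norm_uIoc.trans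
    (setIntegral_le_integral hg.norm (.of_forall fun _ => norm_nonneg _))

variable [CompleteSpace E]

lemma hasDerivAt_windowIntegral (hg : Continuous g) (a b x : ℝ) :
    HasDerivAt (windowIntegral a b g) (g (x + b) - g (x - a)) x := by
  have hprimitive (y : ℝ) : HasDerivAt (fun u => ∫ t in (0 : ℝ)..u, g t) (g y) y :=
    (hg.integral_hasStrictDerivAt 0 y).hasDerivAt
  have hsplit : windowIntegral a b g =
      fun x => (∫ t in (0 : ℝ)..(x + b), g t) - ∫ t in (0 : ℝ)..(x - a), g t := by
    ext y
    exact (intervalIntegral.integral_interval_sub_left (hg.intervalIntegrable _ _)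
      (hg.intervalIntegrable _ _)).symm
  rw [hsplit]
  exact ((hprimitive (x + b)).comp_add_const x b).sub ((hprimitive (x - a)).comp_sub_const x a)

lemma deriv_windowIntegral (hg : ContDiff ℝ 1 g) (a b : ℝ) :
    deriv (windowIntegral a b g) = windowIntegral a b (deriv g) := by
  ext x
  rw [(hasDerivAt_windowIntegral hg.continuous a b x).deriv, windowIntegral,
    intervalIntegral.integral_deriv_eq_sub (fun t _ => hg.differentiable one_ne_zero t)
      ((hg.continuous_deriv le_rfl).intervalIntegrable _ _)]

lemma iteratedDeriv_windowIntegral {n : ℕ} (hg : ContDiff ℝ n g) (a b : ℝ) :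
    iteratedDeriv n (windowIntegral a b g) = windowIntegral a b (iteratedDeriv n g) := by
  induction n generalizing g with
  | zero => simp only [iteratedDeriv_zero]
  | succ n ih =>
    have hg' : ContDiff ℝ n (deriv g) := (contDiff_succ_iff_deriv.1 hg).2.2
    rw [iteratedDeriv_succ', deriv_windowIntegral (hg.of_le (by simp)), ih hg', iteratedDeriv_succ']

lemma contDiff_succ_windowIntegral {n : ℕ} (hg : ContDiff ℝ n g) (a b : ℝ) :
    ContDiff ℝ (n + 1) (windowIntegral a b g) := by
  have hderiv := hasDerivAt_windowIntegral hg.continuous a b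
  refine contDiff_succ_iff_deriv.2 ⟨fun x => (hderiv x).differentiableAt, by simp, ?_⟩
  rw [funext fun x => (hderiv x).deriv]
  fun_prop

end WindowIntegral

section MulWindowIntegral

variable {𝔸 : Type*} [NormedRing 𝔸] [NormedAlgebra ℝ 𝔸] [CompleteSpace 𝔸] {f g : ℝ → 𝔸} {n : ℕ}

lemma MemSobolev.contDiff_windowIntegral_sq (hg : MemSobolev n g) (a b : ℝ) :
    ContDiff ℝ n (windowIntegral a b (g ^ 2)) :=
  (contDiff_succ_windowIntegral (hg.contDiff.pow 2) a b).of_le (by exact_mod_cast n.le_succ)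

lemma MemSobolev.jetNormSq_windowIntegral_sq_le (hg : MemSobolev n g) (a b x : ℝ) :
    jetNormSq n (windowIntegral a b (g ^ 2)) x ≤ (n + 1) * (4 ^ n * sobolevSq n g ^ 2) := by
  refine jetNormSq_le_of_sq_norm_iteratedDeriv_le fun j hj => ?_
  have hsq : ContDiff ℝ j (g ^ 2) := (hg.contDiff.of_le (by exact_mod_cast hj)).pow 2
  have hnorm : ‖iteratedDeriv j (windowIntegral a b (g ^ 2)) x‖ ≤ 2 ^ j * sobolevSq n g := by
    rw [iteratedDeriv_windowIntegral hsq]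
    exact (norm_windowIntegral_le (hg.integrable_iteratedDeriv_sq hj) a b x).trans
      (hg.integral_norm_iteratedDeriv_sq_le hj)
  calc ‖iteratedDeriv j (windowIntegral a b (g ^ 2)) x‖ ^ 2
      ≤ (2 ^ j * sobolevSq n g) ^ 2 := by gcongr
    _ = 4 ^ j * sobolevSq n g ^ 2 := by
        rw [mul_pow, pow_right_comm]
        norm_num
    _ ≤ 4 ^ n * sobolevSq n g ^ 2 := by
        gcongr
        norm_num

lemma MemSobolev.mul_windowIntegral_sq (hf : MemSobolev n f) (hg : MemSobolev n g) (a b : ℝ) :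
    MemSobolev n (f * windowIntegral a b (g ^ 2)) :=
  hf.mul_of_jetNormSq_le (hg.contDiff_windowIntegral_sq a b)
    (hg.jetNormSq_windowIntegral_sq_le a b)

lemma MemSobolev.sobolevSq_mul_windowIntegral_sq_le (hf : MemSobolev n f) (hg : MemSobolev n g)
    (a b : ℝ) :
    sobolevSq n (f * windowIntegral a b (g ^ 2)) ≤
      ((n + 1) * 4 ^ n) ^ 2 * sobolevSq n f * sobolevSq n g ^ 2 := by
  refine (hf.sobolevSq_mul_le (hg.contDiff_windowIntegral_sq a b)
    (hg.jetNormSq_windowIntegral_sq_le a b)).trans_eq ?_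
  ring

end MulWindowIntegral

theorem stmt16_general {𝔸 : Type*} [NormedRing 𝔸] [NormedAlgebra ℝ 𝔸] [CompleteSpace 𝔸]
    (s : ℕ) {cg : ℝ} (hcg : cg ≠ 0) :
    ∃ C > (0 : ℝ), ∀ Fp Fm : ℝ → 𝔸,
      ContDiff ℝ s Fp → ContDiff ℝ s Fm →
      (∀ j ≤ s, Integrable fun x => ‖iteratedDeriv j Fp x‖ ^ 2) →
      (∀ j ≤ s, Integrable fun x => ‖iteratedDeriv j Fm x‖ ^ 2) →
      ∀ T : ℝ,
        let h : ℝ → 𝔸 := fun X => (1 / (2 * cg)) • Fp (X + cg * T) *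
          ∫ τ in (X - cg * T)..(X + cg * T), Fm τ ^ 2
        (∀ j ≤ s, Integrable fun X => ‖iteratedDeriv j h X‖ ^ 2) ∧
        ∑ j ∈ Finset.range (s + 1), ∫ X, ‖iteratedDeriv j h X‖ ^ 2
          ≤ C * (∑ j ∈ Finset.range (s + 1), ∫ x, ‖iteratedDeriv j Fp x‖ ^ 2)
              * (∑ j ∈ Finset.range (s + 1), ∫ x, ‖iteratedDeriv j Fm x‖ ^ 2) ^ 2 := by
  refine ⟨((s + 1) * 4 ^ s) ^ 2 * (1 / (2 * cg)) ^ 2, by positivity,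
    fun Fp Fm hFp hFm hip him T => ?_⟩
  intro h
  have hp : MemSobolev s Fp := memSobolev_iff.2 ⟨hFp, hip⟩
  have hm : MemSobolev s Fm := memSobolev_iff.2 ⟨hFm, him⟩
  have hshift := (hp.comp_add_const (cg * T)).const_smul (1 / (2 * cg))
  have hh : MemSobolev s h := hshift.mul_windowIntegral_sq hm _ _
  refine ⟨(memSobolev_iff.1 hh).2, ?_⟩
  rw [← hh.sobolevSq_eq_sum, ← hp.sobolevSq_eq_sum, ← hm.sobolevSq_eq_sum]
  refine (hshift.sobolevSq_mul_windowIntegral_sq_le hm _ _).trans_eq ?_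
  rw [sobolevSq_const_smul, sobolevSq_comp_add_const, mul_assoc (_ ^ 2) (_ ^ 2)]

theorem stmt16 (s : ℕ) (hs : 1 ≤ s) (cg : ℝ) (hcg : 0 < cg) :
    ∃ C > (0 : ℝ), ∀ Fp Fm : ℝ → ℝ,
      ContDiff ℝ s Fp → ContDiff ℝ s Fm →
      (∀ j ≤ s, Integrable (fun x => (iteratedDeriv j Fp x) ^ 2)) →
      (∀ j ≤ s, Integrable (fun x => (iteratedDeriv j Fm x) ^ 2)) →
      ∀ T : ℝ,
        ∑ j ∈ Finset.range (s + 1),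
            ∫ X, (iteratedDeriv j (fun X => hsol cg Fp Fm T X) X) ^ 2
          ≤ C * (∑ j ∈ Finset.range (s + 1), ∫ x, (iteratedDeriv j Fp x) ^ 2)
              * (∑ j ∈ Finset.range (s + 1), ∫ x, (iteratedDeriv j Fm x) ^ 2) ^ 2 := by
  obtain ⟨C, hC, bound⟩ := stmt16_general (𝔸 := ℝ) s hcg.ne'
  simp only [Real.norm_eq_abs, sq_abs] at bound
  exact ⟨C, hC, fun Fp Fm hFp hFm hip him T => (bound Fp Fm hFp hFm hip him T).2⟩
end
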